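/- arXiv:1411.3463 — 2 statements merged into one kernel-verified Lean document; each statement's English description precedes it below -/
import Mathlib

section
/- Define h̃_i^{(p)} by: h̃_N^{(1)} = 1/q_N; h̃_i^{(1)} = F_i·h̃_{i+1}^{(1)} + 1/q_i for i = 1,…,N−1; h̃_N^{(p)} = 0 for p ≥ 2; and h̃_i^{(p)} = F_i·(h̃_{i+1}^{(p)} + p·h̃_{i+1}^{(1)}·h̃_{i+1}^{(p−1)}) + Σ_{k=1}^{p−2} C(p,k)·h̃_{i+1}^{(k)}·h̃_i^{(p−k)} for i = 1,…,N−1 and p ≥ 2. Define g_i^{(r)} by: g_N^{(r)} = 0 for all r ≥ 1; g_i^{(1)} = F_i·V_{i+1,i+1} for i = 1,…,N−1, where V = (B^⊤B)^{−1}; and g_i^{(r)} = F_i·g_{i+1}^{(r)} + B̌_{i+1}·g_i^{(r−1)} + Σ_{k=1}^{r−1} g_{i+1}^{(k)}·g_i^{(r−k)} for i = 1,…,N−1 and r ≥ 2. Then for every i = 1,…,N and every integer M ≥ 2, h̃_i^{(M)} = M!·g_i^{(M)}. -/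
open Matrix

/-!
Row `i` of `B V = B⁻ᵀ`, together with the symmetry of `V`, yields
`q_i V_{ii} = 1 + e_i V_{i+1,i+1}`; hence `V_{ii} = h̃_i^{(1)}` and
`g_i^{(1)} = F_i h̃_{i+1}^{(1)}`. Let `x` be the row `g_{i+1}` with `B̌_{i+1}` added to its first
entry. The recurrence of `g` becomes `g_i^{(r)} = F_i x_r + ∑_{k=1}^{r-1} x_k g_i^{(r-k)}`. If
`h̃_{i+1}^{(p)} = p! x_p` for `p ≥ 1`, then dividing the recurrence of `h̃_i` by `p!` produces the
same one: the binomial coefficients turn into an ordinary convolution, and the term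
`p h̃_{i+1}^{(1)} h̃_{i+1}^{(p-1)}` into its summand `k = p - 1`. Descending induction on `i`
concludes.
-/

section UpperBidiagonal

variable {R : Type*} {N : ℕ}

/-- The `N × N` upper bidiagonal matrix with diagonal `a 0, …, a (N - 1)` and superdiagonal
`b 0, …, b (N - 2)`. The entries are taken from sequences indexed by `ℕ`, whose further terms are
ignored. -/
def upperBidiagonal [Zero R] (N : ℕ) (a b : ℕ → R) : Matrix (Fin N) (Fin N) R :=
  of fun i j => if (j : ℕ) = i then a i else if (j : ℕ) = i + 1 then b i else 0

lemma upperBidiagonal_apply [Zero R] (a b : ℕ → R) (i j : Fin N) :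
    upperBidiagonal N a b i j =
      if (j : ℕ) = i then a i else if (j : ℕ) = i + 1 then b i else 0 :=
  rfl

lemma blockTriangular_upperBidiagonal [Zero R] (a b : ℕ → R) :
    (upperBidiagonal N a b).BlockTriangular id := by
  intro i j hji
  have hji : (j : ℕ) < i := hji
  rw [upperBidiagonal_apply, if_neg (by omega), if_neg (by omega)]

lemma det_upperBidiagonal [CommRing R] (a b : ℕ → R) :
    (upperBidiagonal N a b).det = ∏ i : Fin N, a i := by
  simp [det_of_isUpperTriangular (blockTriangular_upperBidiagonal a b), upperBidiagonal_apply]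

lemma upperBidiagonal_mul_apply_of_lt {m : Type*} [NonUnitalNonAssocSemiring R] (a b : ℕ → R)
    (A : Matrix (Fin N) m R) {i : ℕ} (hi : i + 1 < N) (j : m) :
    (upperBidiagonal N a b * A) ⟨i, by omega⟩ j =
      a i * A ⟨i, by omega⟩ j + b i * A ⟨i + 1, hi⟩ j := by
  rw [mul_apply, Fintype.sum_eq_add ⟨i, i.lt_succ_self.trans hi⟩ ⟨i + 1, hi⟩ (by simp)]
  · simp [upperBidiagonal_apply]
  · rintro k ⟨hki, hki'⟩
    simp [upperBidiagonal_apply, Fin.val_ne_of_ne hki, Fin.val_ne_of_ne hki']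

lemma upperBidiagonal_mul_apply_last {m : Type*} [NonUnitalNonAssocSemiring R] (a b : ℕ → R)
    (A : Matrix (Fin N) m R) (hN : N - 1 < N) (j : m) :
    (upperBidiagonal N a b * A) ⟨N - 1, hN⟩ j = a (N - 1) * A ⟨N - 1, hN⟩ j := by
  rw [mul_apply, Fintype.sum_eq_single ⟨N - 1, hN⟩]
  · simp [upperBidiagonal_apply]
  · intro k hk
    rw [upperBidiagonal_apply, if_neg (Fin.val_ne_of_ne hk), if_neg (by dsimp only; omega),
      zero_mul]

end UpperBidiagonal

section InverseGram

variable {n R : Type*} [Fintype n] [DecidableEq n] [CommRing R]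

lemma mul_inv_transpose_mul_self {A : Matrix n n R} (hA : IsUnit A.det) :
    A * (Aᵀ * A)⁻¹ = A⁻¹ᵀ := by
  rw [Matrix.mul_inv_rev, mul_nonsing_inv_cancel_left _ _ hA, transpose_nonsing_inv]

lemma isSymm_inv_transpose_mul_self (A : Matrix n n R) : (Aᵀ * A)⁻¹.IsSymm :=
  (isSymm_transpose_mul_self A).inv

variable {N : ℕ} {a b : ℕ → R}

lemma inv_upperBidiagonal_apply_of_lt (hdet : IsUnit (upperBidiagonal N a b).det) {i j : Fin N}
    (hji : j < i) : (upperBidiagonal N a b)⁻¹ i j = 0 :=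
  have := invertibleOfIsUnitDet _ hdet
  blockTriangular_inv_of_blockTriangular (blockTriangular_upperBidiagonal a b) hji

lemma mul_inv_upperBidiagonal_apply_self (hdet : IsUnit (upperBidiagonal N a b).det)
    (i : Fin N) : a i * (upperBidiagonal N a b)⁻¹ i i = 1 := by
  have hmul := congrFun₂ (mul_nonsing_inv _ hdet) i i
  rw [one_apply_eq] at hmul
  obtain ⟨i, hi⟩ := i
  rcases (show i + 1 < N ∨ i = N - 1 by omega) with hi' | rfl
  · rwa [upperBidiagonal_mul_apply_of_lt a b _ hi',
      inv_upperBidiagonal_apply_of_lt hdet (Fin.mk_lt_mk.2 i.lt_succ_self), mul_zero,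
      add_zero] at hmul
  · rwa [upperBidiagonal_mul_apply_last] at hmul

lemma sq_mul_inv_gram_upperBidiagonal_last (hdet : IsUnit (upperBidiagonal N a b).det)
    (hN : N - 1 < N) :
    a (N - 1) ^ 2 * ((upperBidiagonal N a b)ᵀ * upperBidiagonal N a b)⁻¹
      ⟨N - 1, hN⟩ ⟨N - 1, hN⟩ = 1 := by
  have hdiag := mul_inv_upperBidiagonal_apply_self hdet ⟨N - 1, hN⟩
  have hrow := congrFun₂ (mul_inv_transpose_mul_self hdet) ⟨N - 1, hN⟩ ⟨N - 1, hN⟩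
  rw [upperBidiagonal_mul_apply_last, transpose_apply] at hrow
  rw [sq, mul_assoc, hrow, hdiag]

lemma sq_mul_inv_gram_upperBidiagonal_of_lt (hdet : IsUnit (upperBidiagonal N a b).det)
    {i : ℕ} (hi : i + 1 < N) :
    a i ^ 2 * ((upperBidiagonal N a b)ᵀ * upperBidiagonal N a b)⁻¹
        ⟨i, by omega⟩ ⟨i, by omega⟩ =
      1 + b i ^ 2 * ((upperBidiagonal N a b)ᵀ * upperBidiagonal N a b)⁻¹
        ⟨i + 1, hi⟩ ⟨i + 1, hi⟩ := by
  have hdiag := mul_inv_upperBidiagonal_apply_self hdet ⟨i, by omega⟩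
  have hsymm := (isSymm_inv_transpose_mul_self (upperBidiagonal N a b)).apply
    ⟨i, by omega⟩ ⟨i + 1, hi⟩
  have hrow := congrFun₂ (mul_inv_transpose_mul_self hdet) ⟨i, by omega⟩
  have hrow_self := hrow ⟨i, by omega⟩
  have hrow_succ := hrow ⟨i + 1, hi⟩
  rw [upperBidiagonal_mul_apply_of_lt a b _ hi, transpose_apply] at hrow_self hrow_succ
  rw [inv_upperBidiagonal_apply_of_lt hdet (Fin.mk_lt_mk.2 i.lt_succ_self)] at hrow_succ
  linear_combination a i * hrow_self - b i * hrow_succ + hdiag - a i * b i * hsymm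

end InverseGram

lemma inv_gram_upperBidiagonal_apply_self_eq_of_recurrence {K : Type*} [Field K] {N : ℕ}
    {a b u : ℕ → K} (ha : ∀ i < N, a i ≠ 0) (hu_last : u (N - 1) = 1 / a (N - 1) ^ 2)
    (hu : ∀ i, i + 1 < N → u i = b i ^ 2 / a i ^ 2 * u (i + 1) + 1 / a i ^ 2)
    {i : ℕ} (hi : i < N) :
    ((upperBidiagonal N a b)ᵀ * upperBidiagonal N a b)⁻¹ ⟨i, hi⟩ ⟨i, hi⟩ = u i := by
  have hdet : IsUnit (upperBidiagonal N a b).det := by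
    rw [det_upperBidiagonal]
    exact (Finset.prod_ne_zero_iff.2 fun j _ => ha _ j.2).isUnit
  induction Nat.le_sub_one_of_lt hi using Nat.decreasingInduction with
  | self =>
    rw [hu_last, eq_one_div_of_mul_eq_one_right (sq_mul_inv_gram_upperBidiagonal_last hdet hi)]
  | of_succ j hj ih =>
    have hj' : j + 1 < N := by omega
    have hgram := sq_mul_inv_gram_upperBidiagonal_of_lt hdet hj'
    rw [ih hj'] at hgram
    have haj := ha j hi
    rw [hu j hj']
    field_simp
    linear_combination hgram

section Recurrence

variable {R : Type*} [CommSemiring R]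

lemma choose_mul_factorial_mul_mul_factorial_mul {p k : ℕ} (hk : k ≤ p) (x y : R) :
    (p.choose k : R) * (k.factorial * x) * ((p - k).factorial * y) = p.factorial * (x * y) := by
  rw [← Nat.choose_mul_factorial_mul_factorial hk]
  push_cast
  ring

/-- The sequence `x` with `c` added to its entry of index `1`. It turns the row `g_i` into the row
whose entries are `h̃_i^{(p)} / p!`, with `c = B̌_i`. -/
def augmentFirst (c : R) (x : ℕ → R) : ℕ → R :=
  fun k => if k = 1 then x k + c else x k

lemma augmentFirst_one (c : R) (x : ℕ → R) : augmentFirst c x 1 = x 1 + c :=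
  if_pos rfl

lemma augmentFirst_of_ne_one (c : R) (x : ℕ → R) {k : ℕ} (hk : k ≠ 1) :
    augmentFirst c x k = x k :=
  if_neg hk

lemma sum_augmentFirst_mul (c : R) (x y : ℕ → R) {n : ℕ} (hn : 1 ≤ n) :
    ∑ k ∈ Finset.Icc 1 n, augmentFirst c x k * y k =
      c * y 1 + ∑ k ∈ Finset.Icc 1 n, x k * y k := by
  rw [← Finset.add_sum_Ioc_eq_sum_Icc hn, ← Finset.add_sum_Ioc_eq_sum_Icc hn, augmentFirst_one,
    Finset.sum_congr rfl fun k hk => by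
      rw [augmentFirst_of_ne_one c x (Finset.mem_Ioc.1 hk).1.ne']]
  ring

lemma eq_factorial_mul_of_row_recurrence {f : R} {x y h h' : ℕ → R}
    (hx : ∀ k, 1 ≤ k → h' k = k.factorial * x k) (hy_one : y 1 = f * x 1)
    (hy : ∀ r, 2 ≤ r → y r = f * x r + ∑ k ∈ Finset.Icc 1 (r - 1), x k * y (r - k))
    (hh : ∀ p, 2 ≤ p → h p = f * (h' p + p * h' 1 * h' (p - 1)) +
      ∑ k ∈ Finset.Icc 1 (p - 2), (p.choose k : R) * h' k * h (p - k))
    {p : ℕ} (hp : 2 ≤ p) : h p = p.factorial * y p := by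
  induction p using Nat.strong_induction_on with
  | _ p ih =>
    have hconv : ∑ k ∈ Finset.Icc 1 (p - 2), (p.choose k : R) * h' k * h (p - k) =
        p.factorial * ∑ k ∈ Finset.Icc 1 (p - 2), x k * y (p - k) := by
      rw [Finset.mul_sum]
      refine Finset.sum_congr rfl fun k hk => ?_
      rw [Finset.mem_Icc] at hk
      rw [hx k hk.1, ih (p - k) (by omega) (by omega),
        choose_mul_factorial_mul_mul_factorial_mul (by omega)]
    obtain ⟨m, rfl⟩ := Nat.exists_eq_add_of_le' hp
    have hlast : y (m + 2) = f * x (m + 2) +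
        (∑ k ∈ Finset.Icc 1 m, x k * y (m + 2 - k) + x (m + 1) * (f * x 1)) := by
      rw [hy _ hp, show m + 2 - 1 = m + 1 from rfl, Finset.sum_Icc_succ_top (by omega),
        show m + 2 - (m + 1) = 1 by omega, hy_one]
    rw [hh _ hp, hconv, hlast, hx _ (by omega), hx 1 le_rfl, hx (m + 2 - 1) (by omega),
      show m + 2 - 1 = m + 1 from rfl, Nat.add_sub_cancel, Nat.factorial_succ (m + 1)]
    push_cast [Nat.factorial_one]
    ring

theorem eq_factorial_mul_augmentFirst_of_recurrence {N : ℕ} {f c : ℕ → R} {h g : ℕ → ℕ → R}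
    (h_one_last : h 1 (N - 1) = c (N - 1))
    (h_one : ∀ i, i + 1 < N → h 1 i = f i * h 1 (i + 1) + c i)
    (h_last : ∀ p, 2 ≤ p → h p (N - 1) = 0)
    (h_rec : ∀ p, 2 ≤ p → ∀ i, i + 1 < N →
      h p i = f i * (h p (i + 1) + p * h 1 (i + 1) * h (p - 1) (i + 1)) +
        ∑ k ∈ Finset.Icc 1 (p - 2), (p.choose k : R) * h k (i + 1) * h (p - k) i)
    (g_last : ∀ r, 1 ≤ r → g r (N - 1) = 0)
    (g_one : ∀ i, i + 1 < N → g 1 i = f i * h 1 (i + 1))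
    (g_rec : ∀ r, 2 ≤ r → ∀ i, i + 1 < N →
      g r i = f i * g r (i + 1) + c (i + 1) * g (r - 1) i +
        ∑ k ∈ Finset.Icc 1 (r - 1), g k (i + 1) * g (r - k) i)
    {i p : ℕ} (hi : i < N) (hp : 1 ≤ p) : h p i = p.factorial * augmentFirst (c i) (g · i) p := by
  induction Nat.le_sub_one_of_lt hi using Nat.decreasingInduction generalizing p with
  | self =>
    rcases hp.eq_or_lt with rfl | hp
    · simp [augmentFirst_one, h_one_last, g_last]
    · simp [augmentFirst_of_ne_one _ _ hp.ne', h_last p hp, g_last p hp.le]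
  | of_succ i hi' ih =>
    have hi' : i + 1 < N := by omega
    rcases hp.eq_or_lt with rfl | hp
    · simp [augmentFirst_one, h_one i hi', g_one i hi']
    set x := augmentFirst (c (i + 1)) (g · (i + 1)) with hx
    have g_one_eq : g 1 i = f i * x 1 := by
      rw [g_one i hi', ih hi' le_rfl, Nat.factorial_one, Nat.cast_one, one_mul]
    have g_conv : ∀ r, 2 ≤ r →
        g r i = f i * x r + ∑ k ∈ Finset.Icc 1 (r - 1), x k * g (r - k) i := by
      intro r hr
      rw [g_rec r hr i hi', sum_augmentFirst_mul _ _ (fun k => g (r - k) i) (by omega),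
        hx, augmentFirst_of_ne_one _ _ (by omega), add_assoc]
    rw [augmentFirst_of_ne_one _ _ hp.ne']
    exact eq_factorial_mul_of_row_recurrence (fun _ => ih hi') g_one_eq g_conv
      (fun p hp => h_rec p hp i hi') hp

end Recurrence

theorem stmt_10_general {K : Type*} [Field K] (N : ℕ) (a b : ℕ → K) (ha : ∀ i < N, a i ≠ 0)
    (q e : ℕ → K) (haq : ∀ i < N, a i ^ 2 = q i) (hbe : ∀ i, i + 1 < N → b i ^ 2 = e i)
    (B : Matrix (Fin N) (Fin N) K) (hB : B = upperBidiagonal N a b)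
    (V : Matrix (Fin N) (Fin N) K) (hV : V = (Bᵀ * B)⁻¹)
    (ht : ℕ → ℕ → K)
    (hht1a : ht 1 (N - 1) = 1 / q (N - 1))
    (hht1b : ∀ i, i + 1 < N → ht 1 i = e i / q i * ht 1 (i + 1) + 1 / q i)
    (hhtp0 : ∀ p, 2 ≤ p → ht p (N - 1) = 0)
    (hhtp : ∀ p, 2 ≤ p → ∀ i, i + 1 < N →
      ht p i = e i / q i * (ht p (i + 1) + p * ht 1 (i + 1) * ht (p - 1) (i + 1))
        + ∑ k ∈ Finset.Icc 1 (p - 2), (p.choose k : K) * ht k (i + 1) * ht (p - k) i)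
    (g : ℕ → ℕ → K)
    (hgN : ∀ r, 1 ≤ r → g r (N - 1) = 0)
    (hg1 : ∀ i (h1 : i + 1 < N),
      g 1 i = e i / q i * V ⟨i + 1, by omega⟩ ⟨i + 1, by omega⟩)
    (hgr : ∀ r, 2 ≤ r → ∀ i, i + 1 < N →
      g r i = e i / q i * g r (i + 1) + 1 / q (i + 1) * g (r - 1) i
        + ∑ k ∈ Finset.Icc 1 (r - 1), g k (i + 1) * g (r - k) i) :
    ∀ i, i < N → ∀ M, 2 ≤ M → ht M i = (Nat.factorial M : K) * g M i := by
  intro i hi M hM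
  have hV_diag : ∀ j (hj : j < N), V ⟨j, hj⟩ ⟨j, hj⟩ = ht 1 j := fun j hj => by
    rw [hV, hB]
    refine inv_gram_upperBidiagonal_apply_self_eq_of_recurrence ha ?_ (fun k hk => ?_) hj
    · rw [hht1a, haq _ (by omega)]
    · rw [hht1b k hk, haq k (by omega), hbe k hk]
  have hg1' : ∀ j, j + 1 < N → g 1 j = e j / q j * ht 1 (j + 1) := fun j hj => by
    rw [hg1 j hj, hV_diag]
  rw [eq_factorial_mul_augmentFirst_of_recurrence (f := fun j => e j / q j)
    (c := fun j => 1 / q j) hht1a hht1b hhtp0 hhtp hgN hg1' hgr hi (by omega),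
    augmentFirst_of_ne_one _ _ (by omega)]

/-- the relationship `h̃_i^{(M)} = M! · g_i^{(M)}` for `M ≥ 2`.
Indices are 0-based: the paper's 1-based `h̃_i^{(p)}` is `ht p (i-1)`,
`g_i^{(r)}` is `g r (i-1)`; `B̌_i = 1/q_i` is `1 / q (i-1)`;
`F_i = e_i/q_i` is `e (i-1) / q (i-1)`; `V = (BᵀB)⁻¹`. -/
theorem stmt_10 (N : ℕ) (hN : 0 < N) (q e : ℕ → ℝ)
    (hq : ∀ i, i < N → 0 < q i) (he : ∀ i, i + 1 < N → 0 < e i)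
    (B : Matrix (Fin N) (Fin N) ℝ)
    (hB : ∀ i j : Fin N, B i j =
      if (j : ℕ) = (i : ℕ) then Real.sqrt (q i)
      else if (j : ℕ) = (i : ℕ) + 1 then Real.sqrt (e i) else 0)
    (V : Matrix (Fin N) (Fin N) ℝ) (hV : V = (Bᵀ * B)⁻¹)
    (ht : ℕ → ℕ → ℝ)
    (hht1a : ht 1 (N - 1) = 1 / q (N - 1))
    (hht1b : ∀ i, i + 1 < N → ht 1 i = e i / q i * ht 1 (i + 1) + 1 / q i)
    (hhtp0 : ∀ p, 2 ≤ p → ht p (N - 1) = 0)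
    (hhtp : ∀ p, 2 ≤ p → ∀ i, i + 1 < N →
      ht p i = e i / q i * (ht p (i + 1) + p * ht 1 (i + 1) * ht (p - 1) (i + 1))
        + ∑ k ∈ Finset.Icc 1 (p - 2), (p.choose k : ℝ) * ht k (i + 1) * ht (p - k) i)
    (g : ℕ → ℕ → ℝ)
    (hgN : ∀ r, 1 ≤ r → g r (N - 1) = 0)
    (hg1 : ∀ i (h1 : i + 1 < N),
      g 1 i = e i / q i * V ⟨i + 1, by omega⟩ ⟨i + 1, by omega⟩)
    (hgr : ∀ r, 2 ≤ r → ∀ i, i + 1 < N →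
      g r i = e i / q i * g r (i + 1) + 1 / q (i + 1) * g (r - 1) i
        + ∑ k ∈ Finset.Icc 1 (r - 1), g k (i + 1) * g (r - k) i) :
    ∀ i, i < N → ∀ M, 2 ≤ M → ht M i = (Nat.factorial M : ℝ) * g M i :=
  stmt_10_general N _ _ (fun i hi => (Real.sqrt_pos.2 (hq i hi)).ne') q e
    (fun i hi => Real.sq_sqrt (hq i hi).le) (fun i hi => Real.sq_sqrt (he i hi).le)
    B (Matrix.ext hB) V hV ht hht1a hht1b hhtp0 hhtp g hgN hg1 hgr
end

section
/- Let W = (BB^⊤)^{−1} with entries W_{i,j}. For all indices with 1 ≤ j < i ≤ N, W_{i,j} = −√(F̃_i)·W_{i−1,j}, and by symmetry of W also W_{j,i} = −√(F̃_i)·W_{j,i−1}. -/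
open Matrix

/-!
For an upper triangular `B`, the matrix `Bᵀ (B Bᵀ)⁻¹ = B⁻¹` is upper triangular. If `B` is moreover
bidiagonal, each of its columns has at most two nonzero entries, so the vanishing of an entry of
`Bᵀ (B Bᵀ)⁻¹` below the diagonal is a relation between two consecutive entries in a column of
`(B Bᵀ)⁻¹`.
-/

section Triangular

variable {m α R : Type*} [Fintype m] [DecidableEq m] [CommRing R] {M : Matrix m m R}

theorem isUnit_det_iff_of_isUpperTriangular [LinearOrder m] (hM : M.IsUpperTriangular) :
    IsUnit M.det ↔ ∀ i, IsUnit (M i i) := by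
  rw [det_of_isUpperTriangular hM, IsUnit.prod_univ_iff]

theorem mul_inv_mul_eq_inv_of_isUnit_det (hM : IsUnit M.det) (L : Matrix m m R) :
    M * (L * M)⁻¹ = L⁻¹ := by
  rw [Matrix.mul_inv_rev, mul_nonsing_inv_cancel_left _ _ hM]

theorem blockTriangular_transpose_mul_inv_mul_transpose [LinearOrder α] {b : m → α}
    (hM : M.BlockTriangular b) (hdet : IsUnit M.det) :
    (Mᵀ * (M * Mᵀ)⁻¹).BlockTriangular b := by
  have : Invertible M := invertibleOfIsUnitDet M hdet
  rw [mul_inv_mul_eq_inv_of_isUnit_det (isUnit_det_transpose M hdet)]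
  exact blockTriangular_inv_of_blockTriangular hM

end Triangular

/-- A matrix indexed by an ordered type is upper bidiagonal if its entries vanish off the diagonal
and the first superdiagonal. These positions are encoded by the weak covering relation `i ⩿ j`,
which for indices in `Fin n` means that `j = i` or `j = i + 1`. -/
def IsUpperBidiagonal {n R : Type*} [Preorder n] [Zero R] (A : Matrix n n R) : Prop :=
  ∀ ⦃i j⦄, ¬ i ⩿ j → A i j = 0

namespace IsUpperBidiagonal

variable {m n R : Type*}

theorem isUpperTriangular [Preorder n] [Zero R] {A : Matrix n n R} (hA : IsUpperBidiagonal A) :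
    A.IsUpperTriangular :=
  fun _ _ hji ↦ hA fun hij ↦ hij.le.not_gt hji

theorem transpose_mul_apply [LinearOrder n] [Fintype n] [NonUnitalNonAssocSemiring R]
    {A : Matrix n n R} (hA : IsUpperBidiagonal A) (X : Matrix n m R) {p i : n} (hpi : p ⋖ i)
    (j : m) : (Aᵀ * X) i j = A p i * X p j + A i i * X i j := by
  simp only [mul_apply, transpose_apply]
  refine Fintype.sum_eq_add p i hpi.ne fun k ⟨hkp, hki⟩ ↦ ?_
  have hk : ¬ k ⩿ i := fun h ↦ hkp ((h.covBy_of_ne hki).unique_left hpi)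
  rw [hA hk, zero_mul]

theorem mul_inv_mul_transpose_apply_add_eq_zero [LinearOrder n] [Fintype n] [CommRing R]
    {A : Matrix n n R} (hA : IsUpperBidiagonal A) (hdet : IsUnit A.det) {p i j : n}
    (hpi : p ⋖ i) (hji : j < i) :
    A p i * (A * Aᵀ)⁻¹ p j + A i i * (A * Aᵀ)⁻¹ i j = 0 := by
  rw [← hA.transpose_mul_apply _ hpi]
  exact blockTriangular_transpose_mul_inv_mul_transpose hA.isUpperTriangular hdet hji

theorem inv_mul_transpose_apply_eq [LinearOrder n] [Fintype n] [Field R]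
    {A : Matrix n n R} (hA : IsUpperBidiagonal A) (hdiag : ∀ i, A i i ≠ 0) {p i j : n}
    (hpi : p ⋖ i) (hji : j < i) :
    (A * Aᵀ)⁻¹ i j = -(A p i / A i i) * (A * Aᵀ)⁻¹ p j := by
  have hdet : IsUnit A.det :=
    (isUnit_det_iff_of_isUpperTriangular hA.isUpperTriangular).2 fun i ↦ (hdiag i).isUnit
  have hrel := hA.mul_inv_mul_transpose_apply_add_eq_zero hdet hpi hji
  have hi := hdiag i
  field_simp
  linear_combination hrel

end IsUpperBidiagonal

/-- for `W = (BBᵀ)⁻¹` and `j < i`, `W_{i,j} = -√(F̃_i)·W_{i-1,j}` and,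
by symmetry, `W_{j,i} = -√(F̃_i)·W_{j,i-1}`. Indices are 0-based: the paper's
`F̃_i = e_{i-1}/q_i` is `e (i-1) / q i` at the 0-based index `i`. -/
theorem stmt_13 (N : ℕ) (hN : 0 < N) (q e : ℕ → ℝ)
    (hq : ∀ i, i < N → 0 < q i) (he : ∀ i, i + 1 < N → 0 < e i)
    (B : Matrix (Fin N) (Fin N) ℝ)
    (hB : ∀ i j : Fin N, B i j =
      if (j : ℕ) = (i : ℕ) then Real.sqrt (q i)
      else if (j : ℕ) = (i : ℕ) + 1 then Real.sqrt (e i) else 0)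
    (W : Matrix (Fin N) (Fin N) ℝ) (hW : W = (B * Bᵀ)⁻¹)
    (i j : Fin N) (hji : (j : ℕ) < (i : ℕ)) :
    W i j = -Real.sqrt (e ((i : ℕ) - 1) / q i)
        * W ⟨(i : ℕ) - 1, lt_of_le_of_lt (Nat.sub_le _ _) i.isLt⟩ j ∧
    W j i = -Real.sqrt (e ((i : ℕ) - 1) / q i)
        * W j ⟨(i : ℕ) - 1, lt_of_le_of_lt (Nat.sub_le _ _) i.isLt⟩ := by
  have hbidiag : IsUpperBidiagonal B := fun a b hab ↦ by
    simp only [wcovBy_iff_eq_or_covBy, Fin.covBy_iff, Nat.covBy_iff_add_one_eq, Fin.ext_iff] at hab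
    rw [hB, if_neg (by omega), if_neg (by omega)]
  have hdiag (a : Fin N) : B a a = √(q a) := by rw [hB, if_pos rfl]
  have hdiag_ne (a : Fin N) : B a a ≠ 0 := hdiag a ▸ (Real.sqrt_pos.2 (hq a a.isLt)).ne'
  set p : Fin N := ⟨(i : ℕ) - 1, lt_of_le_of_lt (Nat.sub_le _ _) i.isLt⟩
  have hp : (p : ℕ) + 1 = i := Nat.sub_add_cancel (by omega)
  have hpi : p ⋖ i := Fin.covBy_iff.2 (Nat.covBy_iff_add_one_eq.2 hp)
  have hsuper : B p i = √(e p) := by rw [hB, if_neg (by omega), if_pos hp.symm]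
  have hrow : W i j = -√(e p / q i) * W p j := by
    rw [Real.sqrt_div' _ (hq i i.isLt).le, ← hsuper, ← hdiag, hW]
    exact hbidiag.inv_mul_transpose_apply_eq hdiag_ne hpi hji
  have hsymm : W.IsSymm := hW ▸ (isSymm_mul_transpose_self B).inv
  exact ⟨hrow, by rw [← hsymm.apply j i, ← hsymm.apply j p]; exact hrow⟩
end
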